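/- For all x, y ∈ 𝓡: x ∼ y if and only if |[x]_k − [y]_k| ≤ 1/10^k for every k ∈ ℕ. -/

import Mathlib

/-- The ambient space `𝓡` of decimal representations: an integer part together
with a sequence of digits in `{0,…,9}`. -/
abbrev DecimalRep := ℤ × (ℕ → Fin 10)

namespace DecimalRep

open scoped Classical

/-- The truncation `[x]_k = x₀ + ∑_{i=1}^k x_i / 10^i` of `x` up to the `k`-th
digit, as a rational number. -/
def trunc (x : DecimalRep) (k : ℕ) : ℚ :=
  (x.1 : ℚ) + ∑ i ∈ Finset.range k, ((x.2 i : ℕ) : ℚ) / 10 ^ (i + 1)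

/-- The order `⪯` on `𝓡`: `x ⪯ y` iff every truncation of `x` is at most the
corresponding truncation of `y`. -/
def le (x y : DecimalRep) : Prop := ∀ k : ℕ, trunc x k ≤ trunc y k

/-- The strict order `≺` on `𝓡`. -/
def lt (x y : DecimalRep) : Prop := le x y ∧ x ≠ y

/-- Two decimal representations are equivalent ("have no gap") iff there is no
third element lying between them. -/
def equiv (x y : DecimalRep) : Prop :=
  ¬ ∃ z : DecimalRep, z ≠ x ∧ z ≠ y ∧
      ((le x z ∧ le z y) ∨ (le y z ∧ le z x))

/-- `𝓡₉`: decimal representations ending in an infinite string of nines. -/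
def allNines (x : DecimalRep) : Prop := ∃ N : ℕ, ∀ k ≥ N, x.2 k = 9

/-- `ℚ_F`: decimal representations ending in an infinite string of zeros. -/
def finiteDec (x : DecimalRep) : Prop := ∃ N : ℕ, ∀ k ≥ N, x.2 k = 0

/-- The decimal expansion map `ι : ℚ → 𝓡`, satisfying
`[ι(α)]_k = ⌊10^k·α⌋/10^k` for all `k`. -/
def iota (α : ℚ) : DecimalRep :=
  (⌊α⌋, fun k => ⟨(⌊α * 10 ^ (k + 1)⌋ % 10).toNat, by
    have h1 : (0 : ℤ) ≤ ⌊α * 10 ^ (k + 1)⌋ % 10 := Int.emod_nonneg _ (by norm_num)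
    have h2 : ⌊α * 10 ^ (k + 1)⌋ % 10 < 10 := Int.emod_lt_of_pos _ (by norm_num)
    omega⟩)

/-- `M` is a least upper bound of `W` in `(𝓡,⪯)`. -/
def IsLub (W : Set DecimalRep) (M : DecimalRep) : Prop :=
  (∀ w ∈ W, le w M) ∧ ∀ M' : DecimalRep, (∀ w ∈ W, le w M') → le M M'

/-- `M` is a greatest lower bound of `W` in `(𝓡,⪯)`. -/
def IsGlb (W : Set DecimalRep) (M : DecimalRep) : Prop :=
  (∀ w ∈ W, le M w) ∧ ∀ M' : DecimalRep, (∀ w ∈ W, le M' w) → le M' M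

/-- The least upper bound of a set in `(𝓡,⪯)` (junk value if none exists). -/
noncomputable def sup (W : Set DecimalRep) : DecimalRep :=
  if h : ∃ M, IsLub W M then h.choose else default

/-- The greatest lower bound of a set in `(𝓡,⪯)` (junk value if none exists). -/
noncomputable def inf (W : Set DecimalRep) : DecimalRep :=
  if h : ∃ M, IsGlb W M then h.choose else default

/-- Addition `x ⊕ y := sup {ι([x]_k + [y]_k) : k ∈ ℕ}` on `𝓡`. -/
noncomputable def add (x y : DecimalRep) : DecimalRep :=
  sup { z | ∃ k : ℕ, z = iota (trunc x k + trunc y k) }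

/-- The "additive inverse" map `Ψ(x₀.x₁x₂⋯) = (−1−x₀).(9−x₁)(9−x₂)⋯`. -/
def psi (x : DecimalRep) : DecimalRep :=
  (-1 - x.1, fun k => ⟨9 - (x.2 k).val, by have := (x.2 k).isLt; omega⟩)

/-- The signal map: `0` on the nonnegative part, `1` on the negative part. -/
noncomputable def sign (x : DecimalRep) : ℕ :=
  if le (iota 0) x then 0 else 1

/-- The absolute value `‖x‖ := max {x, Ψ(x)}` with respect to `⪯`. -/
noncomputable def norm (x : DecimalRep) : DecimalRep :=
  if le x (psi x) then psi x else x

/-- Multiplication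
`x ⊗ y := Ψ^(sign x + sign y) (sup {ι([‖x‖]_k · [‖y‖]_k) : k ∈ ℕ})` on `𝓡`. -/
noncomputable def mul (x y : DecimalRep) : DecimalRep :=
  psi^[sign x + sign y]
    (sup { z | ∃ k : ℕ, z = iota (trunc (norm x) k * trunc (norm y) k) })

/-- The multiplicative inverse
`x⁻¹ := Ψ^(sign x) (inf {ι(1/[‖x‖]_k) : k ∈ ℕ, [‖x‖]_k > 0})`. -/
noncomputable def inv (x : DecimalRep) : DecimalRep :=
  psi^[sign x]
    (inf { z | ∃ k : ℕ, 0 < trunc (norm x) k ∧ z = iota (1 / trunc (norm x) k) })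

/-- A sequence of rationals is Cauchy. -/
def IsCauchy (x : ℕ → ℚ) : Prop :=
  ∀ ε : ℚ, 0 < ε → ∃ N : ℕ, ∀ m n : ℕ, N ≤ m → N ≤ n → |x m - x n| < ε

/-- The upper limit `inf { sup {f k : k ≥ n} : n ∈ ℕ }` of a sequence in `𝓡`. -/
noncomputable def upperLimit (f : ℕ → DecimalRep) : DecimalRep :=
  inf { z | ∃ n : ℕ, z = sup { w | ∃ k : ℕ, n ≤ k ∧ w = f k } }

/-- The lower limit `sup { inf {f k : k ≥ n} : n ∈ ℕ }` of a sequence in `𝓡`. -/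
noncomputable def lowerLimit (f : ℕ → DecimalRep) : DecimalRep :=
  sup { z | ∃ n : ℕ, z = inf { w | ∃ k : ℕ, n ≤ k ∧ w = f k } }

end DecimalRep

/- Scaled by `10 ^ k`, truncations become integers, and a strict inequality between them at one
index persists at all later ones. Hence `x ≺ z ≺ y` forces `[x]_k < [z]_k < [y]_k` for a common
`k`, so that `10 ^ k * [x]_k + 1 < 10 ^ k * [y]_k`. Conversely, if this holds for some `k`, the
expansion of `[x]_k + 1 / 10 ^ k` lies strictly between `x` and `y`. -/

namespace DecimalRep

/-- The integer `10 ^ k * [x]_k`, defined by Horner's recursion so that passing from one index to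
the next is linear integer arithmetic. -/
def scaledTrunc (x : DecimalRep) : ℕ → ℤ
  | 0 => x.1
  | k + 1 => 10 * scaledTrunc x k + (x.2 k : ℕ)

lemma scaledTrunc_injective : Function.Injective scaledTrunc := by
  intro x y h
  refine Prod.ext (congrFun h 0) (funext fun k ↦ Fin.ext ?_)
  have eq_k := congrFun h k
  have eq_succ := congrFun h (k + 1)
  simp only [scaledTrunc] at eq_succ
  omega

lemma scaledTrunc_iota (α : ℚ) (k : ℕ) : scaledTrunc (iota α) k = ⌊α * 10 ^ k⌋ := by
  induction k with
  | zero => simp [scaledTrunc, iota]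
  | succ k ih =>
    have floor_div_ten : ⌊α * 10 ^ (k + 1)⌋ / 10 = ⌊α * 10 ^ k⌋ := by
      rw [pow_succ, ← mul_assoc, ← Nat.cast_ofNat (R := ℤ), ← Int.floor_div_natCast,
        Nat.cast_ofNat, mul_div_cancel_right₀ _ (by norm_num)]
    have digit_eq : ((iota α).2 k : ℤ) = ⌊α * 10 ^ (k + 1)⌋ % 10 :=
      Int.toNat_of_nonneg (Int.emod_nonneg _ (by norm_num))
    rw [scaledTrunc, ih, digit_eq, ← floor_div_ten, Int.mul_ediv_add_emod]

lemma trunc_succ (x : DecimalRep) (k : ℕ) :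
    trunc x (k + 1) = trunc x k + ((x.2 k : ℕ) : ℚ) / 10 ^ (k + 1) := by
  rw [trunc, Finset.sum_range_succ, ← add_assoc, ← trunc]

lemma trunc_eq_scaledTrunc_div (x : DecimalRep) (k : ℕ) :
    trunc x k = scaledTrunc x k / 10 ^ k := by
  induction k with
  | zero => simp [trunc, scaledTrunc]
  | succ k ih =>
    rw [trunc_succ, ih, scaledTrunc]
    push_cast
    field_simp
    ring

variable {x y : DecimalRep} {k : ℕ}

lemma trunc_le_trunc_iff : trunc x k ≤ trunc y k ↔ scaledTrunc x k ≤ scaledTrunc y k := by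
  rw [trunc_eq_scaledTrunc_div, trunc_eq_scaledTrunc_div,
    div_le_div_iff_of_pos_right (by positivity), Int.cast_le]

lemma abs_trunc_sub_trunc_le_iff :
    |trunc x k - trunc y k| ≤ 1 / 10 ^ k ↔ |scaledTrunc x k - scaledTrunc y k| ≤ 1 := by
  have ten_pow_pos : (0 : ℚ) < 10 ^ k := by positivity
  rw [trunc_eq_scaledTrunc_div, trunc_eq_scaledTrunc_div, ← sub_div, abs_div,
    abs_of_pos ten_pow_pos, div_le_div_iff_of_pos_right ten_pow_pos]
  norm_cast

lemma scaledTrunc_lt_scaledTrunc_of_le {j : ℕ} (hkj : k ≤ j)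
    (h : scaledTrunc x k < scaledTrunc y k) :
    scaledTrunc x j < scaledTrunc y j := by
  induction j, hkj using Nat.le_induction with
  | base => exact h
  | succ j _ ih =>
    have digit_lt := (x.2 j).isLt
    simp only [scaledTrunc]
    omega

lemma le_of_scaledTrunc_lt (h : scaledTrunc x k < scaledTrunc y k) : le x y := by
  intro j
  rw [trunc_le_trunc_iff]
  by_contra! hj
  rcases le_total k j with hkj | hjk
  · exact hj.asymm (scaledTrunc_lt_scaledTrunc_of_le hkj h)
  · exact h.asymm (scaledTrunc_lt_scaledTrunc_of_le hjk hj)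

lemma lt_iff_exists_scaledTrunc_lt : lt x y ↔ ∃ k, scaledTrunc x k < scaledTrunc y k := by
  constructor
  · rintro ⟨hle, hne⟩
    by_contra! hge
    exact hne (scaledTrunc_injective (funext fun k ↦
      (trunc_le_trunc_iff.1 (hle k)).antisymm (hge k)))
  · rintro ⟨k, hk⟩
    exact ⟨le_of_scaledTrunc_lt hk, by rintro rfl; exact hk.false⟩

lemma exists_lt_and_lt_iff :
    (∃ z, lt x z ∧ lt z y) ↔ ∃ k, scaledTrunc x k + 1 < scaledTrunc y k := by
  simp only [lt_iff_exists_scaledTrunc_lt]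
  constructor
  · rintro ⟨z, ⟨i, hxz⟩, ⟨j, hzy⟩⟩
    have hxz' := scaledTrunc_lt_scaledTrunc_of_le (le_max_left i j) hxz
    have hzy' := scaledTrunc_lt_scaledTrunc_of_le (le_max_right i j) hzy
    exact ⟨max i j, by omega⟩
  · rintro ⟨k, hk⟩
    let z := iota ((scaledTrunc x k + 1 : ℤ) / 10 ^ k)
    have hz : scaledTrunc z k = scaledTrunc x k + 1 := by
      rw [scaledTrunc_iota, div_mul_cancel₀ _ (by positivity), Int.floor_intCast]
    exact ⟨z, ⟨k, by omega⟩, ⟨k, by omega⟩⟩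

lemma equiv_iff_not_exists_lt_and_lt :
    equiv x y ↔ (¬ ∃ z, lt x z ∧ lt z y) ∧ ¬ ∃ z, lt y z ∧ lt z x := by
  simp only [equiv, lt]
  grind

end DecimalRep

open DecimalRep in
/-- `x ∼ y` iff `|[x]_k − [y]_k| ≤ 1/10^k` for every `k`. -/
theorem equiv_iff_trunc_close (x y : DecimalRep) :
    equiv x y ↔ ∀ k : ℕ, |trunc x k - trunc y k| ≤ 1 / 10 ^ k := by
  rw [equiv_iff_not_exists_lt_and_lt, exists_lt_and_lt_iff, exists_lt_and_lt_iff, not_exists,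
    not_exists, ← forall_and]
  refine forall_congr' fun k ↦ ?_
  rw [abs_trunc_sub_trunc_le_iff, abs_le]
  omega
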